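/- Let ξ = {ξ_i, i ∈ ℤ^d} be a strictly stationary ℝ^m-valued random field and let b ∈ ℝ^m. For n ∈ (0,∞)^d and t ∈ [0,∞)^d set S_{[n·t]}(ξ−b) = Σ_{i₁=1}^{[n₁t₁]} ⋯ Σ_{i_d=1}^{[n_dt_d]} (ξ_{(i₁,...,i_d)} − b) (componentwise floors). Suppose there exists f = (f₁,...,f_m) : (0,∞)^d → (0,∞)^m with f_j(n) → ∞ as n → ∞ such that the fields {S_{[n·t]}(ξ−b)_j / f_j(n), t ∈ [0,∞)^d, j = 1,...,m} converge in finite-dimensional distributions, as n → ∞, to an ℝ^m-valued random field X that is continuous in probability and such that X_j(t) is not almost surely constant for every j and every t ∈ (0,∞)^d. Then f_j(n) = (∏_{i=1}^d n_i^{H_i^{(j)}})·L_j(n) with nonnegative reals H_i^{(j)} and coordinate-wise slowly varying functions L_j, and X is multi-self-similar: for every a ∈ (0,∞)^d, {X(a·t)} =_{f.d.d.} {(∏_i a_i^{H_i^{(j)}}·X_j(t))_{j=1}^m}. -/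

import Mathlib

open MeasureTheory Filter Topology

section ConvergenceOfTypes

variable {ι E F G Ω Ω' : Type*} [MeasurableSpace Ω] [MeasurableSpace Ω']
  {μ : Measure Ω'} [IsProbabilityMeasure μ] {ν : Measure Ω} [IsProbabilityMeasure ν]
  {l : Filter ι}

theorem MeasureTheory.TendstoInDistribution.mono_filter [TopologicalSpace E] [MeasurableSpace E]
    [OpensMeasurableSpace E] {X : ι → Ω' → E} {Z : Ω → E} {l' : Filter ι}
    (h : TendstoInDistribution X l Z (fun _ => μ) ν) (hl : l' ≤ l) :
    TendstoInDistribution X l' Z (fun _ => μ) ν :=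
  ⟨h.1, h.2, h.3.mono_left hl⟩

theorem MeasureTheory.TendstoInDistribution.comp_tendsto {κ : Type*} [TopologicalSpace E]
    [MeasurableSpace E] [OpensMeasurableSpace E] {X : ι → Ω' → E} {Z : Ω → E} {l' : Filter κ}
    {u : κ → ι} (h : TendstoInDistribution X l Z (fun _ => μ) ν) (hu : Tendsto u l' l) :
    TendstoInDistribution (fun k => X (u k)) l' Z (fun _ => μ) ν :=
  ⟨fun k => h.1 (u k), h.2, h.3.comp hu⟩

theorem MeasureTheory.TendstoInDistribution.congr_eventually [TopologicalSpace E]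
    [MeasurableSpace E] [OpensMeasurableSpace E] {X Y : ι → Ω' → E} {Z : Ω → E}
    (h : TendstoInDistribution X l Z (fun _ => μ) ν) (hXY : ∀ᶠ i in l, X i = Y i)
    (hY : ∀ i, AEMeasurable (Y i) μ) :
    TendstoInDistribution Y l Z (fun _ => μ) ν := by
  refine ⟨hY, h.2, h.3.congr' ?_⟩
  filter_upwards [hXY] with i hi
  apply Subtype.ext
  simp only [hi]

/-- Slutsky's theorem for a deterministic convergent perturbation. -/
theorem MeasureTheory.TendstoInDistribution.comp_deterministic
    [SeminormedAddCommGroup E] [SecondCountableTopology E] [MeasurableSpace E] [BorelSpace E]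
    [SeminormedAddCommGroup F] [SecondCountableTopology F] [MeasurableSpace F] [BorelSpace F]
    [TopologicalSpace G] [MeasurableSpace G] [BorelSpace G] [l.IsCountablyGenerated]
    {g : E × F → G} (hg : Continuous g) {X : ι → Ω' → E} {Z : Ω → E} {r : ι → F} {c : F}
    (h : TendstoInDistribution X l Z (fun _ => μ) ν) (hr : Tendsto r l (𝓝 c)) :
    TendstoInDistribution (fun i ω => g (X i ω, r i)) l (fun ω => g (Z ω, c)) (fun _ => μ) ν := by
  refine h.continuous_comp_prodMk_of_tendstoInMeasure_const hg (Y := fun i _ => r i) ?_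
    (fun _ => aemeasurable_const)
  intro ε hε
  refine tendsto_const_nhds.congr' ?_
  have hev := (tendsto_iff_edist_tendsto_0.1 hr).eventually (gt_mem_nhds hε)
  filter_upwards [hev] with i hi
  simp [not_le.2 hi]

theorem ae_eq_zero_of_tendstoInDistribution_of_scale_tendsto_zero [l.NeBot]
    [l.IsCountablyGenerated] {X Y : ι → Ω' → ℝ} {Z W : Ω → ℝ} {r : ι → ℝ}
    (hX : TendstoInDistribution X l Z (fun _ => μ) ν)
    (hY : TendstoInDistribution Y l W (fun _ => μ) ν)
    (hXY : ∀ᶠ i in l, ∀ ω, Y i ω = r i * X i ω) (hr : Tendsto r l (𝓝 0)) :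
    ∀ᵐ ω ∂ν, W ω = 0 := by
  have h1 := hX.comp_deterministic (g := fun p : ℝ × ℝ => p.2 * p.1) (by fun_prop) hr
  have h2 := h1.congr_eventually (Y := Y)
    (hXY.mono fun i hi => funext fun ω => (hi ω).symm) hY.1
  have h3 := tendstoInDistribution_unique Y hY h2
  have h4 : ∀ᵐ x ∂(ν.map W), x = 0 := by
    rw [h3]
    refine (ae_map_iff h2.2 (measurableSet_eq_fun measurable_id measurable_const)).2 ?_
    simp
  exact (ae_map_iff hY.2 (measurableSet_singleton (0 : ℝ))).1 h4

theorem not_lt_of_map_const_mul_eq {Z : Ω → ℝ} (hZ : AEMeasurable Z ν)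
    (hZ0 : ¬ ∀ᵐ ω ∂ν, Z ω = 0) {c c' : ℝ} (hc : 0 < c)
    (h : ν.map (fun ω => c * Z ω) = ν.map (fun ω => c' * Z ω)) : ¬ c < c' := by
  intro hcc
  have hc' : 0 < c' := hc.trans hcc
  set q := c / c' with hq
  have hq1 : q < 1 := (div_lt_one hc').2 hcc
  have hq0 : 0 < q := div_pos hc hc'
  have hmap : ν.map (fun ω => q * Z ω) = ν.map Z := by
    have := congrArg (Measure.map (fun x : ℝ => c'⁻¹ * x)) h
    rw [AEMeasurable.map_map_of_aemeasurable (by fun_prop) (by fun_prop),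
      AEMeasurable.map_map_of_aemeasurable (by fun_prop) (by fun_prop)] at this
    convert this using 2
    · funext ω
      simp only [Function.comp, hq]
      field_simp
    · funext ω
      simp only [Function.comp]
      field_simp
  have hpow : ∀ n : ℕ, ν.map (fun ω => q ^ n * Z ω) = ν.map Z := by
    intro n
    induction n with
    | zero => simp
    | succ n ih =>
      have := congrArg (Measure.map (fun x : ℝ => q * x)) ih
      rw [AEMeasurable.map_map_of_aemeasurable (by fun_prop) (by fun_prop),
        AEMeasurable.map_map_of_aemeasurable (by fun_prop) (by fun_prop)] at this
      have h2 : ((fun x : ℝ => q * x) ∘ Z) = fun ω => q * Z ω := rfl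
      rw [h2, hmap] at this
      rw [← this]
      congr 1
      funext ω
      simp only [Function.comp]
      ring
  have hY : TendstoInDistribution (fun (n : ℕ) ω => q ^ n * Z ω) atTop Z (fun _ => ν) ν := by
    refine ⟨fun n => by fun_prop, hZ, ?_⟩
    refine tendsto_const_nhds.congr fun n => ?_
    exact Subtype.ext (hpow n).symm
  exact hZ0 (ae_eq_zero_of_tendstoInDistribution_of_scale_tendsto_zero
    (tendstoInDistribution_const (l := atTop) hZ) hY (Eventually.of_forall fun _ _ => rfl)
    (tendsto_pow_atTop_nhds_zero_of_lt_one hq0.le hq1))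

theorem eq_of_map_const_mul_eq {Z : Ω → ℝ} (hZ : AEMeasurable Z ν)
    (hZ0 : ¬ ∀ᵐ ω ∂ν, Z ω = 0) {c c' : ℝ} (hc : 0 < c) (hc' : 0 < c')
    (h : ν.map (fun ω => c * Z ω) = ν.map (fun ω => c' * Z ω)) : c = c' :=
  le_antisymm (not_lt.1 (not_lt_of_map_const_mul_eq hZ hZ0 hc' h.symm))
    (not_lt.1 (not_lt_of_map_const_mul_eq hZ hZ0 hc h))

/-- Convergence of types for positive scalings. -/
theorem exists_tendsto_scale_of_tendstoInDistribution [l.NeBot] [l.IsCountablyGenerated]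
    {X Y : ι → Ω' → ℝ} {Z W : Ω → ℝ} {r : ι → ℝ}
    (hX : TendstoInDistribution X l Z (fun _ => μ) ν)
    (hY : TendstoInDistribution Y l W (fun _ => μ) ν)
    (hr : ∀ᶠ i in l, 0 < r i) (hXY : ∀ᶠ i in l, ∀ ω, Y i ω = r i * X i ω)
    (hZ : ¬ ∀ᵐ ω ∂ν, Z ω = 0) (hW : ¬ ∀ᵐ ω ∂ν, W ω = 0) :
    ∃ c : ℝ, 0 < c ∧ Tendsto r l (𝓝 c) := by
  have key : ∀ x : ENNReal, ClusterPt x (map (fun i => ENNReal.ofReal (r i)) l) →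
      0 < x.toReal ∧ x ≠ ⊤ ∧ ν.map W = ν.map (fun ω => x.toReal * Z ω) := by
    intro x hx
    set l' := comap (fun i => ENNReal.ofReal (r i)) (𝓝 x) ⊓ l with hl'
    have hne : l'.NeBot := by
      have : (𝓝 x ⊓ map (fun i => ENNReal.ofReal (r i)) l).NeBot := hx
      rwa [← Filter.push_pull', map_neBot_iff] at this
    have hll : l' ≤ l := inf_le_right
    have hlim : Tendsto (fun i => ENNReal.ofReal (r i)) l' (𝓝 x) :=
      tendsto_comap.mono_left inf_le_left
    have hX' := hX.mono_filter hll
    have hY' := hY.mono_filter hll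
    have hr' := hr.filter_mono hll
    have hXY' := hXY.filter_mono hll
    have htop : x ≠ ⊤ := by
      rintro rfl
      have h1 := tendsto_inv_atTop_zero.comp (ENNReal.tendsto_ofReal_nhds_top.1 hlim)
      refine hZ (ae_eq_zero_of_tendstoInDistribution_of_scale_tendsto_zero hY' hX' ?_ h1)
      filter_upwards [hr', hXY'] with i hi hi' ω
      rw [hi' ω, Function.comp, inv_mul_cancel_left₀ hi.ne']
    have hlimr : Tendsto r l' (𝓝 x.toReal) := by
      refine ((ENNReal.tendsto_toReal htop).comp hlim).congr' ?_
      filter_upwards [hr'] with i hi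
      simp [ENNReal.toReal_ofReal hi.le]
    refine ⟨?_, htop, ?_⟩
    · refine lt_of_le_of_ne ENNReal.toReal_nonneg fun h0 => hW ?_
      rw [← h0] at hlimr
      exact ae_eq_zero_of_tendstoInDistribution_of_scale_tendsto_zero hX' hY' hXY' hlimr
    · have h1 := hX'.comp_deterministic (g := fun p : ℝ × ℝ => p.2 * p.1) (by fun_prop) hlimr
      have h2 := h1.congr_eventually (Y := Y)
        (hXY'.mono fun i hi => funext fun ω => (hi ω).symm) hY.1
      exact tendstoInDistribution_unique Y hY' h2
  obtain ⟨x, hx⟩ := exists_clusterPt_of_compactSpace (map (fun i => ENNReal.ofReal (r i)) l)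
  obtain ⟨hx0, hxt, hxm⟩ := key x hx
  refine ⟨x.toReal, hx0, ?_⟩
  have hle : Tendsto (fun i => ENNReal.ofReal (r i)) l (𝓝 x) := by
    refine le_nhds_of_unique_clusterPt fun y hy => ?_
    obtain ⟨hy0, hyt, hym⟩ := key y hy
    have := eq_of_map_const_mul_eq hX.2 hZ hy0 hx0 (hym.symm.trans hxm)
    exact (ENNReal.toReal_eq_toReal_iff' hyt hxt).1 this
  refine ((ENNReal.tendsto_toReal hxt).comp hle).congr' ?_
  filter_upwards [hr] with i hi
  simp [ENNReal.toReal_ofReal hi.le]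

end ConvergenceOfTypes

section RegularVariation

theorem exists_rpow_of_multiplicative {g : ℝ → ℝ} (hpos : ∀ x, 0 < x → 0 < g x)
    (hmul : ∀ x y, 0 < x → 0 < y → g (x * y) = g x * g y)
    (hle : ∀ x, 0 < x → x ≤ 1 → g x ≤ 1) :
    ∃ H : ℝ, 0 ≤ H ∧ ∀ x, 0 < x → g x = x ^ H := by
  have hadd : ∀ u v : ℝ, Real.log (g (Real.exp (u + v)))
      = Real.log (g (Real.exp u)) + Real.log (g (Real.exp v)) := fun u v => by
    rw [Real.exp_add, hmul _ _ (Real.exp_pos _) (Real.exp_pos _),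
      Real.log_mul (hpos _ (Real.exp_pos _)).ne' (hpos _ (Real.exp_pos _)).ne']
  let φ : ℝ →+ ℝ := AddMonoidHom.mk' (fun u => Real.log (g (Real.exp u))) hadd
  have hφ : ∀ u, φ u = Real.log (g (Real.exp u)) := fun _ => rfl
  have hneg : ∀ u : ℝ, u ≤ 0 → φ u ≤ 0 := fun u hu =>
    Real.log_nonpos (hpos _ (Real.exp_pos _)).le
      (hle _ (Real.exp_pos _) (Real.exp_le_one_iff.2 hu))
  have hmono : Monotone φ := fun u v huv => by
    have h1 := hneg (u - v) (by linarith)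
    rw [map_sub] at h1
    linarith
  have hcont : Continuous φ := MeasureTheory.Measure.AddMonoidHom.continuous_of_measurable φ hmono.measurable
  refine ⟨φ 1, by simpa using hmono zero_le_one, fun x hx => ?_⟩
  have h1 : φ (Real.log x) = Real.log x * φ 1 := by
    simpa using map_real_smul φ hcont (Real.log x) 1
  rw [hφ, Real.exp_log hx] at h1
  rw [Real.rpow_def_of_pos hx, ← h1, Real.exp_log (hpos x hx)]

theorem mulSingle_pos {d : ℕ} (i : Fin d) {x : ℝ} (hx : 0 < x) (l : Fin d) :
    0 < (Pi.mulSingle i x : Fin d → ℝ) l := by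
  rcases eq_or_ne l i with rfl | h
  · simpa using hx
  · simp [Pi.mulSingle_eq_of_ne h]

theorem exists_prod_rpow_of_multiplicative {d : ℕ} {c : (Fin d → ℝ) → ℝ}
    (hpos : ∀ a, (∀ i, 0 < a i) → 0 < c a)
    (hmul : ∀ a b, (∀ i, 0 < a i) → (∀ i, 0 < b i) → c (a * b) = c a * c b)
    (hle : ∀ (i : Fin d) (x : ℝ), 0 < x → x ≤ 1 → c (Pi.mulSingle i x) ≤ 1) :
    ∃ H : Fin d → ℝ, (∀ i, 0 ≤ H i) ∧ ∀ a, (∀ i, 0 < a i) → c a = ∏ i, a i ^ H i := by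
  have h1d : ∀ i : Fin d, ∃ H : ℝ, 0 ≤ H ∧ ∀ x, 0 < x → c (Pi.mulSingle i x) = x ^ H := fun i =>
    exists_rpow_of_multiplicative (fun x hx => hpos _ (mulSingle_pos i hx))
      (fun x y hx hy => by
        rw [Pi.mulSingle_mul, hmul _ _ (mulSingle_pos i hx) (mulSingle_pos i hy)]) (hle i)
  choose H hH0 hH using h1d
  refine ⟨H, hH0, fun a ha => ?_⟩
  have hone : c 1 = 1 := by
    have h := hmul 1 1 (by simp) (by simp)
    have hp := hpos 1 (by simp)
    rw [one_mul] at h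
    exact (mul_right_eq_self₀.1 h.symm).resolve_right hp.ne'
  have hprod : ∀ s : Finset (Fin d),
      c (∏ i ∈ s, Pi.mulSingle i (a i)) = ∏ i ∈ s, a i ^ H i := by
    intro s
    induction s using Finset.induction_on with
    | empty => simpa using hone
    | insert i s his ih =>
      rw [Finset.prod_insert his, Finset.prod_insert his, hmul _ _ (mulSingle_pos i (ha i)),
        ih, hH i _ (ha i)]
      intro l
      rw [Finset.prod_apply]
      exact Finset.prod_pos fun k _ => mulSingle_pos k (ha k) l
  have h := hprod Finset.univ
  rwa [Finset.univ_prod_mulSingle] at h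

instance isCountablyGenerated_atTop_pi_real {d : ℕ} :
    (atTop : Filter (Fin d → ℝ)).IsCountablyGenerated := by
  have hb : (atTop : Filter (Fin d → ℝ)).HasBasis (fun _ : ℕ => True)
      (fun k => Set.Ici (fun _ => (k : ℝ))) := by
    refine atTop_basis.to_hasBasis (fun x _ => ?_) (fun k _ => ⟨_, trivial, subset_rfl⟩)
    obtain ⟨k, hk⟩ := exists_nat_ge (∑ i, |x i|)
    refine ⟨k, trivial, Set.Ici_subset_Ici.2 fun i => ?_⟩
    exact ((le_abs_self _).trans
      (Finset.single_le_sum (f := fun i => |x i|) (fun _ _ => abs_nonneg _)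
        (Finset.mem_univ i))).trans hk
  exact hb.isCountablyGenerated

theorem eventually_forall_pos_atTop_pi {d : ℕ} :
    ∀ᶠ n : Fin d → ℝ in atTop, ∀ i, 0 < n i := by
  filter_upwards [eventually_ge_atTop 1] with n hn i
  exact zero_lt_one.trans_le (hn i)

theorem tendsto_mul_const_atTop_pi {d : ℕ} {a : Fin d → ℝ} (ha : ∀ i, 0 < a i) :
    Tendsto (fun n : Fin d → ℝ => n * a) atTop atTop := by
  refine tendsto_atTop.2 fun b => ?_
  filter_upwards [eventually_ge_atTop (b / a)] with n hn i
  exact (div_le_iff₀ (ha i)).1 (hn i)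

end RegularVariation

section PartialSums

variable {d m : ℕ} {Ω' : Type*}

/-- The normalized partial sum `S_{[n·t]}(ξ−b)_j / f_j(n)`. -/
noncomputable def normalizedSum (ξ : (Fin d → ℤ) → Ω' → (Fin m → ℝ)) (b : Fin m → ℝ)
    (f : (Fin d → ℝ) → Fin m → ℝ) (t n : Fin d → ℝ) (ω : Ω') (j : Fin m) : ℝ :=
  (∑ i' ∈ Finset.Icc (1 : Fin d → ℤ) (fun l => ⌊n l * t l⌋), (ξ i' ω j - b j)) / f n j

theorem normalizedSum_mul (ξ : (Fin d → ℤ) → Ω' → (Fin m → ℝ)) (b : Fin m → ℝ)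
    (f : (Fin d → ℝ) → Fin m → ℝ) (a t n : Fin d → ℝ) (ω : Ω') (j : Fin m)
    (hf : f (n * a) j ≠ 0) :
    normalizedSum ξ b f (a * t) n ω j
      = f (n * a) j / f n j * normalizedSum ξ b f t (n * a) ω j := by
  simp only [normalizedSum, Pi.mul_apply, mul_assoc]
  field_simp

theorem measurable_normalizedSum [MeasurableSpace Ω'] {ξ : (Fin d → ℤ) → Ω' → (Fin m → ℝ)}
    (hξ : ∀ i, Measurable (ξ i)) (b : Fin m → ℝ) (f : (Fin d → ℝ) → Fin m → ℝ)
    (t n : Fin d → ℝ) : Measurable (normalizedSum ξ b f t n) := by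
  unfold normalizedSum
  fun_prop

end PartialSums

/-- Let `ξ = {ξ_i, i ∈ ℤ^d}` be a strictly stationary `ℝ^m`-valued
random field, `b ∈ ℝ^m`, and let
`S_{[n·t]}(ξ−b) = Σ_{i₁=1}^{[n₁t₁]} ⋯ Σ_{i_d=1}^{[n_dt_d]} (ξ_i − b)`.
Suppose the normalized partial-sum fields `(S_{[n·t]}(ξ−b)_j / f_j(n))_j` converge
in finite-dimensional distributions, as `n → ∞` (`min_i n_i → ∞`), to a field `X`
that is continuous in probability with `X_j(t)` not a.s. constant for `t ∈ (0,∞)^d`,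
where `f_j(n) → ∞`. Then `f_j(n) = (∏_i n_i^{H_i^{(j)}})·L_j(n)` with nonnegative
reals `H_i^{(j)}` and coordinate-wise slowly varying `L_j`, and `X` is
multi-self-similar with exponents `H`. -/
theorem stmt_15 {d m : ℕ} {Ω Ω' : Type*} [MeasurableSpace Ω] [MeasurableSpace Ω']
    (P : Measure Ω) [IsProbabilityMeasure P]
    (P' : Measure Ω') [IsProbabilityMeasure P']
    (ξ : (Fin d → ℤ) → Ω' → (Fin m → ℝ)) (b : Fin m → ℝ)
    (hξmeas : ∀ i, Measurable (ξ i))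
    -- strict stationarity of `ξ`
    (hstat : ∀ (h : Fin d → ℤ) (k : ℕ) (t : Fin k → Fin d → ℤ),
      Measure.map (fun ω => fun i => ξ (t i + h) ω) P'
        = Measure.map (fun ω => fun i => ξ (t i) ω) P')
    (X : (Fin d → ℝ) → Ω → (Fin m → ℝ))
    (hXmeas : ∀ t, Measurable (X t))
    -- `X` is continuous in probability on `[0,∞)^d`
    (hXcont : ∀ t : Fin d → ℝ, (∀ i, 0 ≤ t i) →
      ∀ u : ℕ → Fin d → ℝ, (∀ n i, 0 ≤ u n i) → Tendsto u atTop (𝓝 t) →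
        TendstoInMeasure P (fun n => X (u n)) atTop (X t))
    -- `X_j(t)` is not a.s. constant for `t ∈ (0,∞)^d`
    (hXnd : ∀ (j : Fin m) (t : Fin d → ℝ), (∀ i, 0 < t i) →
      ¬ ∃ c : ℝ, ∀ᵐ ω ∂P, X t ω j = c)
    (f : (Fin d → ℝ) → Fin m → ℝ)
    (hfpos : ∀ n : Fin d → ℝ, (∀ i, 0 < n i) → ∀ j, 0 < f n j)
    -- `f_j(n) → ∞` as `n → ∞`
    (hftop : ∀ j, Tendsto (fun n : Fin d → ℝ => f n j) atTop atTop)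
    -- convergence of finite-dimensional distributions of the normalized sums
    (hconv : ∀ (k : ℕ) (t : Fin k → Fin d → ℝ), (∀ i i', 0 ≤ t i i') →
      ∀ φ : BoundedContinuousFunction (Fin k → Fin m → ℝ) ℝ,
        Tendsto (fun n : Fin d → ℝ =>
            ∫ ω, φ (fun i => fun j =>
              (∑ i' ∈ Finset.Icc (1 : Fin d → ℤ) (fun l => ⌊n l * t i l⌋),
                (ξ i' ω j - b j)) / f n j) ∂P')
          atTop (𝓝 (∫ ω, φ (fun i => X (t i) ω) ∂P))) :
    ∃ (H : Fin m → Fin d → ℝ) (L : Fin m → (Fin d → ℝ) → ℝ),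
      (∀ j i, 0 ≤ H j i) ∧
      (∀ (j : Fin m) (n : Fin d → ℝ), (∀ i, 0 < n i) → 0 < L j n) ∧
      -- each `L j` is coordinate-wise slowly varying
      (∀ (j : Fin m) (x : Fin d → ℝ), (∀ i, 0 < x i) →
        Tendsto (fun n : Fin d → ℝ => L j (n * x) / L j n) atTop (𝓝 1)) ∧
      (∀ n : Fin d → ℝ, (∀ i, 0 < n i) → ∀ j,
        f n j = (∏ i, n i ^ H j i) * L j n) ∧
      -- `X` is multi-self-similar
      (∀ a : Fin d → ℝ, (∀ i, 0 < a i) →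
        ∀ (k : ℕ) (t : Fin k → Fin d → ℝ), (∀ i i', 0 ≤ t i i') →
          Measure.map (fun ω => fun i => X (a * t i) ω) P
            = Measure.map
                (fun ω => fun i => fun j => (∏ i', a i' ^ H j i') * X (t i) ω j) P) := by
  have hT : ∀ (k : ℕ) (t : Fin k → Fin d → ℝ), (∀ i i', 0 ≤ t i i') →
      TendstoInDistribution (fun n ω i => normalizedSum ξ b f (t i) n ω) atTop
        (fun ω i => X (t i) ω) (fun _ => P') P := by
    intro k t ht
    have hm : ∀ n : Fin d → ℝ, Measurable fun ω i => normalizedSum ξ b f (t i) n ω := fun n =>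
      measurable_pi_lambda _ fun i => measurable_normalizedSum hξmeas b f (t i) n
    have hm' : Measurable fun ω i => X (t i) ω := measurable_pi_lambda _ fun i => hXmeas (t i)
    refine ⟨fun n => (hm n).aemeasurable, hm'.aemeasurable, ?_⟩
    refine ProbabilityMeasure.tendsto_iff_forall_integral_tendsto.2 fun φ => ?_
    simp only [ProbabilityMeasure.coe_mk]
    rw [integral_map hm'.aemeasurable φ.continuous.aestronglyMeasurable]
    refine (hconv k t ht φ).congr fun n => ?_
    rw [integral_map (hm n).aemeasurable φ.continuous.aestronglyMeasurable]
    rfl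
  have hTs : ∀ (j : Fin m) (t : Fin d → ℝ), (∀ i, 0 ≤ t i) →
      TendstoInDistribution (fun n ω => normalizedSum ξ b f t n ω j) atTop
        (fun ω => X t ω j) (fun _ => P') P := fun j t ht =>
    (hT 1 (fun _ => t) (fun _ => ht)).continuous_comp
      (g := fun x : Fin 1 → Fin m → ℝ => x 0 j) (by fun_prop)
  have hXj : ∀ t j, Measurable fun ω => X t ω j := fun t j =>
    (measurable_pi_apply j).comp (hXmeas t)
  have hnz : ∀ (j : Fin m) (t : Fin d → ℝ), (∀ i, 0 < t i) → ¬ ∀ᵐ ω ∂P, X t ω j = 0 :=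
    fun j t ht h => hXnd j t ht ⟨0, h⟩
  have hratio : ∀ (a : Fin d → ℝ), (∀ i, 0 < a i) → ∀ t : Fin d → ℝ,
      ∀ᶠ n in atTop, ∀ (ω : Ω') (j : Fin m), normalizedSum ξ b f (a * t) n ω j
        = f (n * a) j / f n j * normalizedSum ξ b f t (n * a) ω j := by
    intro a ha t
    filter_upwards [eventually_forall_pos_atTop_pi] with n hn ω j
    exact normalizedSum_mul ξ b f a t n ω j
      (hfpos _ (fun i => mul_pos (hn i) (ha i)) j).ne'
  have hc : ∀ (j : Fin m) (a : Fin d → ℝ), ∃ c : ℝ, (∀ i, 0 < a i) →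
      0 < c ∧ Tendsto (fun n => f (n * a) j / f n j) atTop (𝓝 c) := by
    intro j a
    by_cases ha : ∀ i, 0 < a i
    · have h1 := (hTs j 1 (by simp)).comp_tendsto (tendsto_mul_const_atTop_pi ha)
      have h2 := hTs j (a * 1) (fun i => by simpa using (ha i).le)
      obtain ⟨c, hc⟩ := exists_tendsto_scale_of_tendstoInDistribution h1 h2
        (r := fun n => f (n * a) j / f n j)
        (by
          filter_upwards [eventually_forall_pos_atTop_pi] with n hn
          exact div_pos (hfpos _ (fun i => mul_pos (hn i) (ha i)) j) (hfpos n hn j))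
        ((hratio a ha 1).mono fun n hn ω => hn ω j)
        (hnz j 1 (by simp)) (hnz j _ (by simpa using ha))
      exact ⟨c, fun _ => hc⟩
    · exact ⟨0, fun h => absurd h ha⟩
  choose c hc using hc
  have hcpos := fun j a ha => (hc j a ha).1
  have hclim := fun j a ha => (hc j a ha).2
  have hss : ∀ a : Fin d → ℝ, (∀ i, 0 < a i) →
      ∀ (k : ℕ) (t : Fin k → Fin d → ℝ), (∀ i i', 0 ≤ t i i') →
        Measure.map (fun ω => fun i => X (a * t i) ω) P
          = Measure.map (fun ω => fun i => fun j => c j a * X (t i) ω j) P := by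
    intro a ha k t ht
    have h1 := (hT k t ht).comp_tendsto (tendsto_mul_const_atTop_pi ha)
    have h2 := hT k (fun i => a * t i) (fun i l => mul_nonneg (ha l).le (ht i l))
    have h3 := h1.comp_deterministic
      (g := fun p : (Fin k → Fin m → ℝ) × (Fin m → ℝ) => fun i j => p.2 j * p.1 i j)
      (by fun_prop) (tendsto_pi_nhds.2 fun j => hclim j a ha)
    refine tendstoInDistribution_unique _ h2 (h3.congr_eventually ?_ h2.1)
    filter_upwards [eventually_all.2 fun i => hratio a ha (t i)] with n hn
    funext ω i j
    exact (hn i ω j).symm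
  have hss1 : ∀ (j : Fin m) (a : Fin d → ℝ), (∀ i, 0 < a i) →
      P.map (fun ω => X a ω j) = P.map (fun ω => c j a * X 1 ω j) := by
    intro j a ha
    have h := congrArg (Measure.map fun x : Fin 1 → Fin m → ℝ => x 0 j)
      (hss a ha 1 (fun _ => 1) (by simp))
    rw [Measure.map_map (by fun_prop) (by fun_prop),
      Measure.map_map (by fun_prop) (by fun_prop)] at h
    simpa [Function.comp_def] using h
  have hcmul : ∀ (j : Fin m) (a a' : Fin d → ℝ), (∀ i, 0 < a i) → (∀ i, 0 < a' i) →
      c j (a * a') = c j a * c j a' := by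
    intro j a a' ha ha'
    refine tendsto_nhds_unique (hclim j _ fun i => mul_pos (ha i) (ha' i)) ?_
    have h := ((hclim j a' ha').comp (tendsto_mul_const_atTop_pi ha)).mul (hclim j a ha)
    rw [mul_comm (c j a)]
    refine h.congr' ?_
    filter_upwards [eventually_forall_pos_atTop_pi] with n hn
    have h0 := (hfpos (n * a) (fun i => mul_pos (hn i) (ha i)) j).ne'
    simp only [Function.comp, mul_assoc] at h0 ⊢
    field_simp
  have hcle : ∀ (j : Fin m) (i : Fin d) (x : ℝ), 0 < x → x ≤ 1 →
      c j (Pi.mulSingle i x) ≤ 1 := by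
    intro j i x hx hx1
    by_contra! hgt
    have hpow : ∀ n : ℕ, c j (Pi.mulSingle i (x ^ (n + 1))) = c j (Pi.mulSingle i x) ^ (n + 1) := by
      intro n
      induction n with
      | zero => simp
      | succ n ih =>
        rw [pow_succ x, Pi.mulSingle_mul, hcmul j _ _ (mulSingle_pos i (by positivity))
          (mulSingle_pos i hx), ih, pow_succ _ (n + 1)]
    have hx1' : x < 1 := by
      refine lt_of_le_of_ne hx1 fun h => ?_
      have h1 := hcmul j 1 1 (by simp) (by simp)
      rw [h, Pi.mulSingle_one] at hgt
      rw [one_mul] at h1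
      nlinarith
    have hu : Tendsto (fun n : ℕ => (Pi.mulSingle i (x ^ (n + 1)) : Fin d → ℝ)) atTop
        (𝓝 (Pi.mulSingle i 0)) := by
      have h0 : Tendsto (fun n : ℕ => x ^ (n + 1)) atTop (𝓝 0) :=
        (tendsto_add_atTop_iff_nat 1).2 (tendsto_pow_atTop_nhds_zero_of_lt_one hx.le hx1')
      exact ((continuous_mulSingle i).tendsto 0).comp h0
    have hX0 := hXcont (Pi.mulSingle i 0)
      (fun l => by
        rcases eq_or_ne l i with rfl | h
        · simp
        · simp [Pi.mulSingle_eq_of_ne h])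
      _ (fun n l => (mulSingle_pos i (by positivity) l).le) hu
    have hd : TendstoInDistribution
        (fun (n : ℕ) ω => X (Pi.mulSingle i (x ^ (n + 1))) ω j) atTop
        (fun ω => X (Pi.mulSingle i 0) ω j) (fun _ => P) P :=
      (hX0.tendstoInDistribution fun n => (hXmeas _).aemeasurable).continuous_comp
        (g := fun y : Fin m → ℝ => y j) (by fun_prop)
    have hY : TendstoInDistribution
        (fun (n : ℕ) ω => (c j (Pi.mulSingle i x) ^ (n + 1))⁻¹
          * X (Pi.mulSingle i (x ^ (n + 1))) ω j) atTop
        (fun ω => X 1 ω j) (fun _ => P) P := by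
      refine ⟨fun n => ((hXj _ j).const_mul _).aemeasurable, (hXj 1 j).aemeasurable, ?_⟩
      refine tendsto_const_nhds.congr fun n => Subtype.ext ?_
      have h := congrArg (Measure.map fun y : ℝ => (c j (Pi.mulSingle i x) ^ (n + 1))⁻¹ * y)
        (hss1 j (Pi.mulSingle i (x ^ (n + 1))) (mulSingle_pos i (by positivity)))
      rw [Measure.map_map (by fun_prop) (hXj _ j),
        Measure.map_map (by fun_prop) ((hXj _ j).const_mul _), hpow] at h
      have hne : c j (Pi.mulSingle i x) ^ (n + 1) ≠ 0 := by positivity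
      simp only [Function.comp_def, inv_mul_cancel_left₀ hne] at h
      exact h.symm
    have hr : Tendsto (fun n : ℕ => (c j (Pi.mulSingle i x) ^ (n + 1))⁻¹) atTop (𝓝 0) :=
      tendsto_inv_atTop_zero.comp
        ((tendsto_add_atTop_iff_nat 1).2 (tendsto_pow_atTop_atTop_of_one_lt hgt))
    exact hnz j 1 (by simp) (ae_eq_zero_of_tendstoInDistribution_of_scale_tendsto_zero hd hY
      (Eventually.of_forall fun _ _ => rfl) hr)
  choose H hH0 hH using fun j =>
    exists_prod_rpow_of_multiplicative (hcpos j) (hcmul j) (hcle j)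
  have hprodpos : ∀ (j : Fin m) (n : Fin d → ℝ), (∀ i, 0 < n i) → 0 < ∏ i, n i ^ H j i :=
    fun j n hn => Finset.prod_pos fun i _ => Real.rpow_pos_of_pos (hn i) _
  refine ⟨H, fun j n => f n j / ∏ i, n i ^ H j i, hH0,
    fun j n hn => div_pos (hfpos n hn j) (hprodpos j n hn), fun j x hx => ?_,
    fun n hn j => (mul_div_cancel₀ _ (hprodpos j n hn).ne').symm, fun a ha k t ht => ?_⟩
  · have h := (hclim j x hx).div_const (c j x)
    rw [div_self (hcpos j x hx).ne'] at h
    refine h.congr' ?_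
    filter_upwards [eventually_forall_pos_atTop_pi] with n hn
    have hsplit : ∏ i, (n * x) i ^ H j i = (∏ i, n i ^ H j i) * ∏ i, x i ^ H j i := by
      rw [← Finset.prod_mul_distrib]
      exact Finset.prod_congr rfl fun i _ => Real.mul_rpow (hn i).le (hx i).le
    have h1 := (hprodpos j n hn).ne'
    have h2 := (hprodpos j x hx).ne'
    have h3 := (hfpos n hn j).ne'
    rw [hsplit, hH j x hx]
    field_simp
  · rw [hss a ha k t ht]
    simp only [hH _ a ha]
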